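/- For every clustering 𝒞 of V with disagreement vector y, Σ_{u∈V} Σ_{v ∈ N_u^+ ∩ C(u)} d_uv ≤ 2 · Σ_{u∈V} y(u). -/

import Mathlib

/-!
Let `u`, `v` lie in one cluster `C`, and let `w` lie in exactly one of `N_u^+`, `N_v^+`. If
`w ∉ C`, then `w` has a positive disagreement with the endpoint it is positively joined to; if
`w ∈ C`, then it has a negative disagreement with the other endpoint. Hence
`|N_u^+ ∆ N_v^+| ≤ y(u) + y(v)`, and dividing by `|N_u^+ ∪ N_v^+|` gives
`d_uv ≤ y(u) / |N_u^+| + y(v) / |N_v^+|` (`corrDist_le`).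

Summing over `v ∈ N_u^+ ∩ C(u)` and then over `u`, the first term contributes at most `y(u)` for
each `u`, because there are at most `|N_u^+|` choices of `v`. The second double sum equals the
first, since the relation `v ∈ N_u^+ ∩ C(u)` is symmetric.
-/

open Finset

noncomputable section

variable {V : Type*} [Fintype V] [DecidableEq V]

/-- Positive neighborhood of `u` (including the positive self-loop at `u`). -/
def Nplus (E : V → V → Prop) [DecidableRel E] (u : V) : Finset V :=
  insert u (Finset.univ.filter fun v => v ≠ u ∧ E u v)

/-- Negative neighborhood of `u`. -/
def Nminus (E : V → V → Prop) [DecidableRel E] (u : V) : Finset V :=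
  Finset.univ.filter fun v => v ≠ u ∧ ¬ E u v

/-- The correlation metric `d`. -/
def corrDist (E : V → V → Prop) [DecidableRel E] (u v : V) : ℝ :=
  if u = v then 0
  else 1 - ((Nplus E u ∩ Nplus E v).card : ℝ) / ((Nplus E u ∪ Nplus E v).card : ℝ)

/-- The set `R₁` of vertices `u` with `|N_u^- ∩ {v : d_uv ≤ 0.7}| ≥ (10/3)·Δ_u`. -/
def R1set (E : V → V → Prop) [DecidableRel E] : Finset V :=
  Finset.univ.filter fun u =>
    (10 / 3 : ℝ) * (Nplus E u).card ≤ ((Nminus E u).filter fun v => corrDist E u v ≤ 0.7).card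

/-- The adjusted correlation metric `f`: start from `d`, round negative edges with
`d > 0.7` up to `1`, and set `f_uv = 1` for all `v ≠ u` whenever `u ∈ R₁`. -/
def adjDist (E : V → V → Prop) [DecidableRel E] (u v : V) : ℝ :=
  if u = v then 0
  else if u ∈ R1set E ∨ v ∈ R1set E then 1
  else if ¬ E u v ∧ 0.7 < corrDist E u v then 1
  else corrDist E u v

/-- A clustering is encoded by a map `c : V → V`; the cluster `C(u)` is the fiber of `c` at `u`. -/
def clusterOf (c : V → V) (u : V) : Finset V :=
  Finset.univ.filter fun w => c w = c u

/-- The number of disagreements incident to `u` with respect to the clustering `c`. -/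
def disag (E : V → V → Prop) [DecidableRel E] (c : V → V) (u : V) : ℕ :=
  (Finset.univ.filter fun v =>
    v ≠ u ∧ ((E u v ∧ c u ≠ c v) ∨ (¬ E u v ∧ c u = c v))).card

/-- `OPT(1)`: the minimum total number of disagreements over all clusterings. -/
def OPT1 (E : V → V → Prop) [DecidableRel E] : ℕ :=
  Finset.univ.inf' ⟨id, Finset.mem_univ id⟩ fun c : V → V => ∑ u, disag E c u

/-- `OPT(p)`: the minimum `ℓ_p`-norm of the disagreement vector over all clusterings. -/
def OPTlp (E : V → V → Prop) [DecidableRel E] (p : ℝ) : ℝ :=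
  Finset.univ.inf' ⟨id, Finset.mem_univ id⟩ fun c : V → V =>
    (∑ u, (disag E c u : ℝ) ^ p) ^ (1 / p)

/-- `OPT(∞)`: the minimum `ℓ_∞`-norm of the disagreement vector over all clusterings. -/
def OPTinf (E : V → V → Prop) [DecidableRel E] : ℕ :=
  Finset.univ.inf' ⟨id, Finset.mem_univ id⟩ fun c : V → V => Finset.univ.sup (disag E c)

/-- The set of bad triangles: triples of distinct vertices spanning exactly two positive
edges and one negative edge. -/
def badTriangles (E : V → V → Prop) [DecidableRel E] : Finset (Finset V) :=
  Finset.univ.filter fun T =>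
    ∃ u v w : V, u ≠ v ∧ u ≠ w ∧ v ≠ w ∧ T = {u, v, w} ∧ E u v ∧ E u w ∧ ¬ E v w

lemma mem_Nplus (E : V → V → Prop) [DecidableRel E] {u v : V} :
    v ∈ Nplus E u ↔ v = u ∨ E u v := by
  simp only [Nplus, mem_insert, mem_filter, mem_univ, true_and]
  tauto

lemma card_Nplus_pos (E : V → V → Prop) [DecidableRel E] (u : V) :
    0 < (Nplus E u).card :=
  card_pos.mpr ⟨u, (mem_Nplus E).mpr (Or.inl rfl)⟩

/-- For `u`, `v` in one cluster, each vertex of the symmetric difference of their positive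
neighborhoods is in disagreement with `u` or with `v`, so `|N_u^+ ∆ N_v^+| ≤ y(u) + y(v)`; the size
of the symmetric difference is written as that of the union minus that of the intersection. -/
lemma card_Nplus_union_le (E : V → V → Prop) [DecidableRel E] (c : V → V) {u v : V}
    (hc : c v = c u) :
    (Nplus E u ∪ Nplus E v).card ≤
      (Nplus E u ∩ Nplus E v).card + (disag E c u + disag E c v) := by
  unfold disag
  refine le_trans (card_le_card ?_)
    ((card_union_le _ _).trans (Nat.add_le_add_left (card_union_le _ _) _))
  intro w hw
  simp only [mem_union, mem_inter, mem_Nplus, mem_filter, mem_univ, true_and] at hw ⊢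
  by_cases h : c u = c w
  · have h' : c v = c w := hc.trans h
    tauto
  · have h' : c v ≠ c w := fun e => h (hc.symm.trans e)
    have h1 : w ≠ u := fun e => h (by rw [e])
    have h2 : w ≠ v := fun e => h' (by rw [e])
    tauto

lemma corrDist_le (E : V → V → Prop) [DecidableRel E] (c : V → V) {u v : V}
    (hc : c v = c u) :
    corrDist E u v ≤
      (disag E c u : ℝ) / (Nplus E u).card + (disag E c v : ℝ) / (Nplus E v).card := by
  unfold corrDist
  split_ifs
  · positivity
  have hu : (0 : ℝ) < (Nplus E u).card := by exact_mod_cast card_Nplus_pos E u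
  have hv : (0 : ℝ) < (Nplus E v).card := by exact_mod_cast card_Nplus_pos E v
  have hul : ((Nplus E u).card : ℝ) ≤ (Nplus E u ∪ Nplus E v).card := by
    exact_mod_cast card_le_card subset_union_left
  have hvl : ((Nplus E v).card : ℝ) ≤ (Nplus E u ∪ Nplus E v).card := by
    exact_mod_cast card_le_card subset_union_right
  have hU : (0 : ℝ) < (Nplus E u ∪ Nplus E v).card := hu.trans_le hul
  have key : ((Nplus E u ∪ Nplus E v).card : ℝ) ≤
      (Nplus E u ∩ Nplus E v).card + (disag E c u + disag E c v) := by
    exact_mod_cast card_Nplus_union_le E c hc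
  calc 1 - ((Nplus E u ∩ Nplus E v).card : ℝ) / (Nplus E u ∪ Nplus E v).card
      ≤ (disag E c u : ℝ) / (Nplus E u ∪ Nplus E v).card
        + (disag E c v : ℝ) / (Nplus E u ∪ Nplus E v).card := by
        rw [← add_div, sub_le_iff_le_add, ← add_div, le_div_iff₀ hU]
        linarith
    _ ≤ _ := by gcongr

/-- for every clustering,
`Σ_u Σ_{v ∈ N_u^+ ∩ C(u)} d_uv ≤ 2 · Σ_u y(u)`. -/
theorem l1_same_cluster_pos_cost (E : V → V → Prop) [DecidableRel E]
    (hsymm : ∀ u v, E u v ↔ E v u) (c : V → V) :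
    ∑ u, ∑ v ∈ Nplus E u ∩ clusterOf c u, corrDist E u v ≤
      2 * ∑ u, (disag E c u : ℝ) := by
  have hrow : ∀ u, ∑ _v ∈ Nplus E u ∩ clusterOf c u,
      (disag E c u : ℝ) / (Nplus E u).card ≤ disag E c u := by
    intro u
    have hu : (0 : ℝ) < (Nplus E u).card := by exact_mod_cast card_Nplus_pos E u
    have hle : ((Nplus E u ∩ clusterOf c u).card : ℝ) ≤ (Nplus E u).card := by
      exact_mod_cast card_le_card inter_subset_left
    rw [sum_const, nsmul_eq_mul, mul_div_assoc', div_le_iff₀ hu, mul_comm]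
    gcongr
  have hswap : ∑ u, ∑ v ∈ Nplus E u ∩ clusterOf c u, (disag E c v : ℝ) / (Nplus E v).card =
      ∑ v, ∑ _u ∈ Nplus E v ∩ clusterOf c v, (disag E c v : ℝ) / (Nplus E v).card := by
    refine sum_comm' fun u v => ?_
    simp only [mem_inter, mem_Nplus, clusterOf, mem_filter, mem_univ, true_and, and_true,
      hsymm u v, eq_comm]
  calc ∑ u, ∑ v ∈ Nplus E u ∩ clusterOf c u, corrDist E u v
      ≤ ∑ u, ∑ v ∈ Nplus E u ∩ clusterOf c u,
          ((disag E c u : ℝ) / (Nplus E u).card + (disag E c v : ℝ) / (Nplus E v).card) := by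
        refine sum_le_sum fun u _ => sum_le_sum fun v hv => corrDist_le E c ?_
        exact (mem_filter.mp (mem_inter.mp hv).2).2
    _ = 2 * ∑ u, ∑ _v ∈ Nplus E u ∩ clusterOf c u,
          (disag E c u : ℝ) / (Nplus E u).card := by
        simp only [sum_add_distrib]
        rw [hswap, two_mul]
    _ ≤ 2 * ∑ u, (disag E c u : ℝ) := by
        gcongr with u
        exact hrow u
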